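/- (Corollary 1.) Fix integers n ≥ 1, dimensions d_1, d_2, d_{12} with 0 ≤ d_{12} ≤ min(d_1, d_2) and d_1 + d_2 − d_{12} ≤ n, and sample sizes m_1, m_2 ≥ 1. There exists a constant C, depending only on these fixed parameters, such that for every prime power q and every pair of subspaces Π_1, Π_2 of F_q^n with dim(Π_1) = d_1, dim(Π_2) = d_2 and dim(Π_1 ∩ Π_2) = d_{12}, the following holds: if Π̂_1 is the span of m_1 vectors chosen independently and uniformly at random from Π_1 and Π̂_2 is the span of m_2 vectors chosen independently and uniformly at random from Π_2 (all m_1 + m_2 vectors mutually independent), then Prob[ dim(Π̂_1 ∩ Π̂_2) = min( d_{12}, (m_1 + m_2 − (d_1 + d_2 − d_{12}))^+, (m_1 − (d_1 − d_{12}))^+, (m_2 − (d_2 − d_{12}))^+ ) ] ≥ 1 − C/q. -/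

import Mathlib

open scoped Classical

/-!
If `U` and `S` are subspaces with `S ⊄ U`, a uniform vector of `S` lies in `U` with probability at
most `1 / q`. Drawing the vectors one at a time, a random `m`-tuple of `S` therefore raises the
dimension of `U` to the largest possible value `min (dim U + m) (dim (U + S))`, except with
probability at most `m / q`.

Apply this to `Ŝ₁` over `0` and over `S₂`, and to `Ŝ₂` over `0` and over `Ŝ₁`. Outside these four
exceptional events `dim Ŝ₁`, `dim Ŝ₂` and `dim (Ŝ₁ + Ŝ₂)` are known (the last one because
`dim (Ŝ₁ + S₂)` is), and the dimension formula gives `dim (Ŝ₁ ∩ Ŝ₂)`.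
-/

open Finset Module Submodule

section Density

variable {α β : Type*} [Fintype α] [Fintype β]

lemma dens_filter_or_le {p q : α → Prop} [DecidablePred p] [DecidablePred q] {c d : ℚ≥0}
    (hp : dens {a | p a} ≤ c) (hq : dens {a | q a} ≤ d) :
    dens {a | p a ∨ q a} ≤ c + d := by
  rw [filter_or]
  exact (dens_union_le _ _).trans (add_le_add hp hq)

lemma dens_filter_fst_le (p : α → Prop) [DecidablePred p] :
    dens {x : α × β | p x.1} ≤ dens {a | p a} := by
  have hprod : ({x | p x.1} : Finset (α × β)) = ({a | p a} : Finset α) ×ˢ univ := by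
    ext; simp
  rw [dens, hprod, card_product, Fintype.card_prod, Nat.cast_mul, Nat.cast_mul, mul_div_mul_comm]
  exact mul_le_of_le_one_right' dens_le_one

lemma dens_filter_prod_le {p : α → β → Prop} [∀ a, DecidablePred (p a)] {c : ℚ≥0}
    (h : ∀ a, dens {b | p a b} ≤ c) : dens {x : α × β | p x.1 x.2} ≤ c := by
  have hcard : #{x : α × β | p x.1 x.2} = ∑ a, #{b | p a b} := by
    simp only [card_filter, Fintype.sum_prod_type]
  refine div_le_of_le_mul₀ zero_le zero_le ?_
  calc ((#{x : α × β | p x.1 x.2} : ℕ) : ℚ≥0)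
      = ∑ a, dens {b | p a b} * Fintype.card β := by simp only [hcard, Nat.cast_sum, dens_mul_card]
    _ ≤ ∑ _a : α, c * Fintype.card β := by gcongr with a; exact h a
    _ = c * Fintype.card (α × β) := by
      simp only [sum_const, card_univ, nsmul_eq_mul, Fintype.card_prod, Nat.cast_mul]
      ring

lemma dens_filter_fst_or_le {p : α → Prop} {q : α → β → Prop} [DecidablePred p]
    [∀ a, DecidablePred (q a)] {c d : ℚ≥0} (hp : dens {a | p a} ≤ c)
    (hq : ∀ a, dens {b | q a b} ≤ d) :
    dens {x : α × β | p x.1 ∨ q x.1 x.2} ≤ c + d :=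
  dens_filter_or_le ((dens_filter_fst_le p).trans hp) (dens_filter_prod_le hq)

lemma dens_filter_comp_equiv (e : α ≃ β) (p : β → Prop) [DecidablePred p] :
    dens {a | p (e a)} = dens {b | p b} := by
  rw [← dens_map_equiv e]
  congr 1
  ext
  simp

lemma one_sub_le_card_filter_div_card [Nonempty α] {p : α → Prop} [DecidablePred p] {c : ℚ≥0}
    (h : dens {a | ¬ p a} ≤ c) :
    1 - (c : ℝ) ≤ (#{a | p a} : ℝ) / Fintype.card α := by
  have hsum : (dens {a | p a} : ℝ) + dens {a | ¬ p a} = 1 := by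
    exact_mod_cast (dens_filter_add_dens_filter_not_eq_dens p).trans dens_univ
  have hc : (dens {a | ¬ p a} : ℝ) ≤ c := by exact_mod_cast h
  rw [← nnratCast_dens]
  linarith

end Density

section Generic

variable {K V : Type*} [DivisionRing K] [AddCommGroup V] [Module K V]

lemma dens_filter_mem_le_of_ne_top [Fintype K] [Fintype V] {U : Submodule K V} (hU : U ≠ ⊤) :
    dens {x | x ∈ U} ≤ 1 / Fintype.card K := by
  have hcard : #{x | x ∈ U} * Fintype.card K ≤ Fintype.card V := by
    rw [← Fintype.card_subtype, Module.card_eq_pow_finrank (K := K) (V := U),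
      Module.card_eq_pow_finrank (K := K) (V := V), ← pow_succ]
    exact Nat.pow_le_pow_right Fintype.card_pos (finrank_lt hU)
  rw [dens, div_le_div_iff₀ (mod_cast Fintype.card_pos) (mod_cast Fintype.card_pos), one_mul]
  exact_mod_cast hcard

lemma dens_filter_coe_mem_le [Fintype K] {S U : Submodule K V} [Fintype S] (h : ¬ S ≤ U) :
    dens {x : S | (x : V) ∈ U} ≤ 1 / Fintype.card K :=
  dens_filter_mem_le_of_ne_top (U := U.comap S.subtype) (mt comap_subtype_eq_top.1 h)

/-- The subspace of the ambient space spanned by a family of vectors of a subspace `S`. -/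
abbrev ambientSpan {S : Submodule K V} {ι : Type*} (v : ι → S) : Submodule K V :=
  span K (Set.range fun i => (v i : V))

lemma ambientSpan_cons {S : Submodule K V} {m : ℕ} (x : S) (v : Fin m → S) :
    ambientSpan (Fin.cons x v : Fin (m + 1) → S) = span K {(x : V)} ⊔ ambientSpan v := by
  rw [← span_union, ambientSpan]
  congr 1
  ext y
  simp [Fin.exists_fin_succ, eq_comm]

/-- A tuple `v` of `m` vectors of `S` is *generic over* `U` if adjoining it to `U` yields a
subspace of the largest dimension possible, `min (dim U + m) (dim (U + S))`. For `U = ⊥` this says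
that `v` is linearly independent or spans `S`. -/
def IsGenericOver (U : Submodule K V) {S : Submodule K V} {m : ℕ} (v : Fin m → S) : Prop :=
  finrank K ↥(U ⊔ ambientSpan v) = min (finrank K U + m) (finrank K ↥(U ⊔ S))

variable {S U : Submodule K V} {m : ℕ}

lemma isGenericOver_bot_iff {v : Fin m → S} :
    IsGenericOver ⊥ v ↔ finrank K (ambientSpan v) = min m (finrank K S) := by
  rw [IsGenericOver, bot_sup_eq, bot_sup_eq, finrank_bot, zero_add]

variable [FiniteDimensional K V]

lemma isGenericOver_fin_zero (v : Fin 0 → S) : IsGenericOver U v := by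
  have hle : finrank K U ≤ finrank K ↥(U ⊔ S) := finrank_mono le_sup_left
  rw [IsGenericOver, ambientSpan, Set.range_eq_empty, span_empty, sup_bot_eq, add_zero,
    min_eq_left hle]

lemma IsGenericOver.cons {x : S} {v : Fin m → S} (hx : (x : V) ∈ U → S ≤ U)
    (hv : IsGenericOver (U ⊔ span K {(x : V)}) v) :
    IsGenericOver U (Fin.cons x v : Fin (m + 1) → S) := by
  have hxS : span K {(x : V)} ⊔ S = S := sup_eq_right.2 ((span_singleton_le_iff_mem _ _).2 x.2)
  rw [IsGenericOver, sup_assoc, sup_assoc, hxS, ← ambientSpan_cons] at hv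
  rw [IsGenericOver, hv]
  by_cases hxU : (x : V) ∈ U
  · rw [sup_eq_left.2 ((span_singleton_le_iff_mem _ _).2 hxU), sup_eq_left.2 (hx hxU)]
    omega
  · rw [finrank_sup_span_singleton hxU, add_right_comm, add_assoc]

lemma dens_filter_not_isGenericOver_le [Fintype K] (U S : Submodule K V) [Fintype S] (m : ℕ) :
    dens {v : Fin m → S | ¬ IsGenericOver U v} ≤ m / Fintype.card K := by
  induction m generalizing U with
  | zero => simp [isGenericOver_fin_zero]
  | succ m ih =>
    have hfirst : dens {x : S | (x : V) ∈ U ∧ ¬ S ≤ U} ≤ 1 / Fintype.card K := by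
      by_cases h : S ≤ U
      · simp [h]
      · simpa [h] using dens_filter_coe_mem_le h
    calc dens {v : Fin (m + 1) → S | ¬ IsGenericOver U v}
        = dens {p : S × (Fin m → S) | ¬ IsGenericOver U (Fin.cons p.1 p.2 : Fin (m + 1) → S)} :=
          (dens_filter_comp_equiv (Fin.consEquiv fun _ => S) _).symm
      _ ≤ dens {p : S × (Fin m → S) | ((p.1 : V) ∈ U ∧ ¬ S ≤ U) ∨
            ¬ IsGenericOver (U ⊔ span K {(p.1 : V)}) p.2} := by
          refine dens_le_dens (monotone_filter_right _ fun p _ hp => ?_)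
          contrapose! hp
          exact .cons hp.1 hp.2
      _ ≤ 1 / Fintype.card K + m / Fintype.card K :=
          dens_filter_fst_or_le (p := fun x : S => (x : V) ∈ U ∧ ¬ S ≤ U)
            (q := fun x v => ¬ IsGenericOver (U ⊔ span K {(x : V)}) v) hfirst fun x => ih _
      _ = (m + 1 : ℕ) / Fintype.card K := by push_cast; ring

end Generic

section Intersection

variable {K V : Type*} [DivisionRing K] [AddCommGroup V] [Module K V]
  {S₁ S₂ : Submodule K V} {m₁ m₂ : ℕ}

lemma finrank_ambientSpan_sup_of_isGenericOver {v₁ : Fin m₁ → S₁} {v₂ : Fin m₂ → S₂}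
    (h₁ : IsGenericOver ⊥ v₁) (h₁₂ : IsGenericOver S₂ v₁)
    (h₂₁ : IsGenericOver (ambientSpan v₁) v₂) :
    finrank K ↥(ambientSpan v₁ ⊔ ambientSpan v₂) =
      min (min m₁ (finrank K S₁) + m₂) (min (finrank K S₂ + m₁) (finrank K ↥(S₁ ⊔ S₂))) := by
  rw [isGenericOver_bot_iff] at h₁
  rw [IsGenericOver, sup_comm, sup_comm S₂] at h₁₂
  rw [h₂₁, h₁, h₁₂]

variable [FiniteDimensional K V]

lemma finrank_ambientSpan_inf_of_isGenericOver {v₁ : Fin m₁ → S₁} {v₂ : Fin m₂ → S₂}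
    (h₁ : IsGenericOver ⊥ v₁) (h₁₂ : IsGenericOver S₂ v₁)
    (h₂ : IsGenericOver ⊥ v₂) (h₂₁ : IsGenericOver (ambientSpan v₁) v₂) :
    finrank K ↥(ambientSpan v₁ ⊓ ambientSpan v₂) =
      min (finrank K ↥(S₁ ⊓ S₂))
        (min (m₁ + m₂ - (finrank K S₁ + finrank K S₂ - finrank K ↥(S₁ ⊓ S₂)))
          (min (m₁ - (finrank K S₁ - finrank K ↥(S₁ ⊓ S₂)))
            (m₂ - (finrank K S₂ - finrank K ↥(S₁ ⊓ S₂))))) := by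
  have hsup := finrank_ambientSpan_sup_of_isGenericOver h₁ h₁₂ h₂₁
  rw [isGenericOver_bot_iff] at h₁ h₂
  have hdim := finrank_sup_add_finrank_inf_eq (ambientSpan v₁) (ambientSpan v₂)
  have hdimS := finrank_sup_add_finrank_inf_eq S₁ S₂
  have hle₁ : finrank K ↥(S₁ ⊓ S₂) ≤ finrank K S₁ := finrank_mono inf_le_left
  have hle₂ : finrank K ↥(S₁ ⊓ S₂) ≤ finrank K S₂ := finrank_mono inf_le_right
  have hsupS : finrank K ↥(S₁ ⊔ S₂) =
      finrank K S₁ + finrank K S₂ - finrank K ↥(S₁ ⊓ S₂) := by omega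
  rw [hsup, hsupS, h₁, h₂] at hdim
  grind

lemma dens_filter_not_isGenericOver_pair_le [Fintype K] (S₁ S₂ : Submodule K V) [Fintype S₁]
    [Fintype S₂] (m₁ m₂ : ℕ) :
    dens {ω : (Fin m₁ → S₁) × (Fin m₂ → S₂) |
        (¬ IsGenericOver ⊥ ω.1 ∨ ¬ IsGenericOver S₂ ω.1) ∨
          (¬ IsGenericOver ⊥ ω.2 ∨ ¬ IsGenericOver (ambientSpan ω.1) ω.2)} ≤
      2 * (m₁ + m₂) / Fintype.card K := by
  refine (dens_filter_fst_or_le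
    (dens_filter_or_le (dens_filter_not_isGenericOver_le ⊥ S₁ m₁)
      (dens_filter_not_isGenericOver_le S₂ S₁ m₁))
    fun v₁ => dens_filter_or_le (dens_filter_not_isGenericOver_le ⊥ S₂ m₂)
      (dens_filter_not_isGenericOver_le (ambientSpan v₁) S₂ m₂)).trans_eq ?_
  ring

theorem stmt_4_general [Fintype K] (S₁ S₂ : Submodule K V) [Fintype S₁] [Fintype S₂]
    (m₁ m₂ : ℕ) :
    1 - 2 * (m₁ + m₂ : ℝ) / Fintype.card K ≤
      (#{ω : (Fin m₁ → S₁) × (Fin m₂ → S₂) |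
          finrank K ↥(ambientSpan ω.1 ⊓ ambientSpan ω.2) =
            min (finrank K ↥(S₁ ⊓ S₂))
              (min (m₁ + m₂ - (finrank K S₁ + finrank K S₂ - finrank K ↥(S₁ ⊓ S₂)))
                (min (m₁ - (finrank K S₁ - finrank K ↥(S₁ ⊓ S₂)))
                  (m₂ - (finrank K S₂ - finrank K ↥(S₁ ⊓ S₂)))))} : ℝ) /
        Fintype.card ((Fin m₁ → S₁) × (Fin m₂ → S₂)) := by
  have hbad := dens_filter_not_isGenericOver_pair_le S₁ S₂ m₁ m₂
  refine le_of_eq_of_le ?_ (one_sub_le_card_filter_div_card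
    ((dens_le_dens (monotone_filter_right _ fun ω _ hω => ?_)).trans hbad))
  · push_cast; rfl
  · contrapose! hω
    exact finrank_ambientSpan_inf_of_isGenericOver hω.1.1 hω.1.2 hω.2.1 hω.2.2

end Intersection

/-- Corollary 1: for fixed `n, d₁, d₂, d₁₂, m₁, m₂` there is a constant `C`
such that for every prime power `q` and all subspaces `S₁, S₂` of `F_q^n` with
`dim S₁ = d₁`, `dim S₂ = d₂`, `dim (S₁ ∩ S₂) = d₁₂`, if `Ŝ₁` is the span of `m₁` uniformly
random vectors of `S₁` and `Ŝ₂` the span of `m₂` uniformly random vectors of `S₂`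
(all independent), then with probability at least `1 − C/q`,
`dim (Ŝ₁ ∩ Ŝ₂) = min(d₁₂, (m₁+m₂−(d₁+d₂−d₁₂))^+, (m₁−(d₁−d₁₂))^+, (m₂−(d₂−d₁₂))^+)`. -/
theorem stmt_4 (n d₁ d₂ d₁₂ m₁ m₂ : ℕ) (hn : 1 ≤ n)
    (hd₁₂ : d₁₂ ≤ min d₁ d₂) (hsum : d₁ + d₂ - d₁₂ ≤ n)
    (hm₁ : 1 ≤ m₁) (hm₂ : 1 ≤ m₂) :
    ∃ C : ℝ, ∀ (q : ℕ), IsPrimePow q →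
      ∀ (F : Type) [Field F] [Fintype F], Fintype.card F = q →
      ∀ (S₁ S₂ : Submodule F (Fin n → F)),
        Module.finrank F ↥S₁ = d₁ → Module.finrank F ↥S₂ = d₂ →
        Module.finrank F ↥(S₁ ⊓ S₂) = d₁₂ →
      1 - C / q ≤
        ((Finset.univ.filter (fun ω : (Fin m₁ → ↥S₁) × (Fin m₂ → ↥S₂) =>
            Module.finrank F
              ↥(Submodule.span F (Set.range (fun i => (ω.1 i : Fin n → F))) ⊓
                Submodule.span F (Set.range (fun i => (ω.2 i : Fin n → F))))
              = min d₁₂ (min (m₁ + m₂ - (d₁ + d₂ - d₁₂))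
                  (min (m₁ - (d₁ - d₁₂)) (m₂ - (d₂ - d₁₂)))))).card : ℝ)
          / (Fintype.card ((Fin m₁ → ↥S₁) × (Fin m₂ → ↥S₂)) : ℝ) := by
  refine ⟨2 * (m₁ + m₂), ?_⟩
  rintro _ - F _ _ rfl S₁ S₂ rfl rfl rfl
  exact stmt_4_general S₁ S₂ m₁ m₂
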